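/- Let m ≥ 2 and let n = 2m − 1 be odd. Then the domination cover pebbling number of the cycle C_n satisfies ψ(C_n) = 2·(Σ_{i=0}^{k_m} 2^{m−2−3i}) + 2⌊α_m/2⌋ − |α_m − 1| = 2^{m+2}·(1 − 8^{−(k_m+1)})/7 + 2⌊α_m/2⌋ − |α_m − 1|, where α_m ∈ {0,1,2} and k_m ≥ 0 are the unique integers with m − 2 = α_m + 3·k_m. -/

import Mathlib

/-!
Write `m = j + 3 K` with `j < 3` and `M = m - 1`, so that the cycle has `2 M + 1` vertices, and put
`T = ∑_{i < K} 2 ^ (j + 3 i + 1)`. Both forms of the claimed number equal `2 T + [j ≠ 0]`.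

*Paths.* Any `T + [j ≠ 0]` pebbles on a path with `j + 3 K = m` vertices can dominate it
(`solv_path`), and `T` pebbles can dominate all but its first `j` vertices (`solv_path_tail`).
This is an induction on `K`: a set of `2 ^ (l + 1)` pebbles on a path with `l + 3` vertices dominates
the last three vertices (`solv_last_three`), and as long as these vertices carry at most that many
pebbles, the rest of the pebbles serves the first `l` vertices (`solv_step`). If the last three
vertices carry more, the path is read from its other end.

*Upper bound.* For a vertex `v`, consider the two arcs of `M` vertices on either side of `v`, and call
an arc heavy if it carries at least `T + [j ≠ 0]` pebbles. If both arcs are heavy, each dominates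
itself together with `v` (`solvable_of_heavy`). If both are light, the pebbles on `v` top both of them
up to `T`, with one to spare if `j ≠ 0`, which dominates `v` and its neighbours
(`solvable_of_light`). If exactly one is heavy for every `v`, then heaviness of the arc after `v`
changes when `v` is rotated by `M + 1`; hence it does not change under rotation by
`2 (M + 1) = 1`, so it is constant, a contradiction (`upper_bound`).

*Lower bound.* Put all pebbles on the vertex `0`. The value `∑ C(u) 2 ^ dist(u, 0)` never increases
under pebbling moves (`weight_move`), so it is enough to show that every dominating configuration
has value at least `2 T + [j ≠ 0]`. This is linear programming duality: the weights `dualW` sum to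
at most `2 ^ dist(u, 0)` over the closed neighbourhood of each `u` (`dual_feasible`) and to
`2 T + [j ≠ 0]` in total (`dual_total`).
-/

/-- A single pebbling move on graph `G`: remove two pebbles from a vertex `u`
carrying at least two pebbles and add one pebble on an adjacent vertex `v`. -/
def PebblingMove {V : Type*} [DecidableEq V] (G : SimpleGraph V) (C C' : V → ℕ) : Prop :=
  ∃ u v : V, G.Adj u v ∧ 2 ≤ C u ∧
    C' = Function.update (Function.update C u (C u - 2)) v (C v + 1)

/-- `D` is a dominating set of `G`: every vertex is in `D` or adjacent to a vertex of `D`. -/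
def IsDomSet {V : Type*} (G : SimpleGraph V) (D : Set V) : Prop :=
  ∀ v : V, v ∈ D ∨ ∃ u ∈ D, G.Adj u v

/-- A configuration is domination-cover-solvable if some (possibly empty) sequence of
pebbling moves leads to a configuration whose set of pebbled vertices dominates `G`. -/
def DomCoverSolvable {V : Type*} [DecidableEq V] (G : SimpleGraph V) (C : V → ℕ) : Prop :=
  ∃ C' : V → ℕ, Relation.ReflTransGen (PebblingMove G) C C' ∧ IsDomSet G {v | 0 < C' v}

/-- The set of numbers `k` such that every configuration with at least `k` pebbles is
domination-cover-solvable; the domination cover pebbling number `ψ(G)` is its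
least element. -/
def DomCoverSet {V : Type*} [Fintype V] [DecidableEq V] (G : SimpleGraph V) : Set ℕ :=
  {k | ∀ C : V → ℕ, k ≤ ∑ v, C v → DomCoverSolvable G C}


open Finset

set_option linter.unusedSectionVars false

/-! ### Pebbling on paths -/

section Pebbling

variable {V : Type*} [DecidableEq V] {G : SimpleGraph V}

lemma move_add {C C' : V → ℕ} (E : V → ℕ) (h : PebblingMove G C C') :
    PebblingMove G (C + E) (C' + E) := by
  obtain ⟨u, v, huv, h2, rfl⟩ := h
  refine ⟨u, v, huv, by simp only [Pi.add_apply]; omega, ?_⟩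
  have hne : u ≠ v := huv.ne
  funext w
  simp only [Pi.add_apply, Function.update_apply]
  split_ifs with h1 h3
  · subst h1; omega
  · subst h3; omega
  · rfl

lemma reach_add {C C' D D' : V → ℕ} (h : Relation.ReflTransGen (PebblingMove G) C C')
    (h' : Relation.ReflTransGen (PebblingMove G) D D') :
    Relation.ReflTransGen (PebblingMove G) (C + D) (C' + D') := by
  have h1 : Relation.ReflTransGen (PebblingMove G) (C + D) (C' + D) :=
    h.lift (· + D) fun _ _ => move_add D
  have h2 : Relation.ReflTransGen (PebblingMove G) (D + C') (D' + C') :=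
    h'.lift (· + C') fun _ _ => move_add C'
  rw [add_comm D, add_comm D'] at h2
  exact h1.trans h2

lemma reach_single {u v : V} (h : G.Adj u v) :
    Relation.ReflTransGen (PebblingMove G) (Pi.single u 2) (Pi.single v 1) := by
  refine Relation.ReflTransGen.single ⟨u, v, h, by simp, ?_⟩
  have hne : u ≠ v := h.ne
  funext w
  simp only [Function.update_apply, Pi.single_apply]
  split_ifs <;> simp_all

/-- From `C`, pebbling moves lead to a configuration whose support dominates every vertex
of `A`. -/
def Solv (G : SimpleGraph V) (C : V → ℕ) (A : Set V) : Prop :=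
  ∃ C' : V → ℕ, Relation.ReflTransGen (PebblingMove G) C C' ∧
    ∀ v ∈ A, 0 < C' v ∨ ∃ u, 0 < C' u ∧ G.Adj u v

lemma Solv.add {C D : V → ℕ} {A B : Set V} (h : Solv G C A) (h' : Solv G D B) :
    Solv G (C + D) (A ∪ B) := by
  obtain ⟨C', hC, hA⟩ := h
  obtain ⟨D', hD, hB⟩ := h'
  refine ⟨C' + D', reach_add hC hD, ?_⟩
  rintro v (hv | hv)
  · rcases hA v hv with h | ⟨u, hu, huv⟩
    · exact Or.inl (by simp only [Pi.add_apply]; omega)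
    · exact Or.inr ⟨u, by simp only [Pi.add_apply]; omega, huv⟩
  · rcases hB v hv with h | ⟨u, hu, huv⟩
    · exact Or.inl (by simp only [Pi.add_apply]; omega)
    · exact Or.inr ⟨u, by simp only [Pi.add_apply]; omega, huv⟩

lemma solv_empty (C : V → ℕ) : Solv G C ∅ := ⟨C, .refl, by simp⟩

lemma Solv.mono {C D : V → ℕ} {A B : Set V} (h : Solv G C A) (hCD : C ≤ D) (hBA : B ⊆ A) :
    Solv G D B := by
  obtain ⟨C', hC, hA⟩ := h.add (solv_empty (D - C))
  rw [add_tsub_cancel_of_le hCD] at hC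
  exact ⟨C', hC, fun v hv => hA v (Or.inl (hBA hv))⟩

lemma Solv.of_reach {C D : V → ℕ} {A : Set V} (h : Solv G D A)
    (hr : Relation.ReflTransGen (PebblingMove G) C D) : Solv G C A := by
  obtain ⟨C', hC, hA⟩ := h
  exact ⟨C', hr.trans hC, hA⟩

/-- One pebble dominates its closed neighbourhood. -/
lemma solv_single (u : V) : Solv G (Pi.single u 1) {v | v = u ∨ G.Adj u v} := by
  refine ⟨_, .refl, ?_⟩
  rintro v (rfl | h)
  · simp
  · exact Or.inr ⟨u, by simp, h⟩

/-- The configuration on `V` obtained by placing `c i` pebbles on `φ i` for each `i < m`. -/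
def push (φ : ℕ → V) (m : ℕ) (c : ℕ → ℕ) : V → ℕ := ∑ i ∈ range m, Pi.single (φ i) (c i)

/-- `φ 0, …, φ (m - 1)` is a walk in `G`. -/
def IsPath (G : SimpleGraph V) (φ : ℕ → V) (m : ℕ) : Prop :=
  ∀ i, i + 1 < m → G.Adj (φ i) (φ (i + 1))

lemma IsPath.mono {φ : ℕ → V} {m l : ℕ} (h : IsPath G φ m) (hl : l ≤ m) : IsPath G φ l :=
  fun i hi => h i (by omega)

lemma push_succ (φ : ℕ → V) (m : ℕ) (c : ℕ → ℕ) :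
    push φ (m + 1) c = push φ m c + Pi.single (φ m) (c m) := by
  simp [push, sum_range_succ]

lemma push_add (φ : ℕ → V) (m : ℕ) (c d : ℕ → ℕ) :
    push φ m (c + d) = push φ m c + push φ m d := by
  simp [push, Pi.single_add, sum_add_distrib]

lemma push_congr {φ : ℕ → V} {m : ℕ} {c d : ℕ → ℕ} (h : ∀ i < m, c i = d i) :
    push φ m c = push φ m d :=
  sum_congr rfl fun i hi => by rw [h i (mem_range.1 hi)]

lemma push_mono {φ : ℕ → V} {m : ℕ} {c d : ℕ → ℕ} (h : ∀ i < m, c i ≤ d i) :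
    push φ m c ≤ push φ m d :=
  sum_le_sum fun i hi => Pi.single_mono (φ i) (h i (mem_range.1 hi))

lemma single_le_push {φ : ℕ → V} {m i k : ℕ} {c : ℕ → ℕ} (hi : i < m) (hk : k ≤ c i) :
    Pi.single (φ i) k ≤ push φ m c :=
  le_trans (Pi.single_mono (φ i) hk)
    (single_le_sum (f := fun i => (Pi.single (φ i) (c i) : V → ℕ))
      (fun _ _ => zero_le) (mem_range.2 hi))

/-- Dropping the first `j` vertices of the walk. -/
lemma push_shift_le (φ : ℕ → V) (m j : ℕ) (c : ℕ → ℕ) :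
    push (fun i => φ (j + i)) m (fun i => c (j + i)) ≤ push φ (j + m) c := by
  unfold push
  rw [sum_range_add]
  exact le_add_of_nonneg_left zero_le

lemma push_reflect (φ : ℕ → V) (m : ℕ) (c : ℕ → ℕ) :
    push (fun i => φ (m - 1 - i)) m (fun i => c (m - 1 - i)) = push φ m c :=
  sum_range_reflect (fun i => (Pi.single (φ i) (c i) : V → ℕ)) m

/-- Any prescribed smaller number of pebbles can be selected from a configuration. -/
lemma exists_sub (s : Finset ℕ) (c : ℕ → ℕ) (r : ℕ) (h : r ≤ ∑ i ∈ s, c i) :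
    ∃ d : ℕ → ℕ, d ≤ c ∧ ∑ i ∈ s, d i = r := by
  induction r with
  | zero => exact ⟨0, fun _ => Nat.zero_le _, by simp⟩
  | succ r ih =>
    obtain ⟨d, hd, hs⟩ := ih (by omega)
    obtain ⟨i, hi, hlt⟩ : ∃ i ∈ s, d i < c i := exists_lt_of_sum_lt (by omega)
    refine ⟨d + Pi.single i 1, fun k => ?_, ?_⟩
    · have := hd k
      by_cases hk : k = i
      · subst hk; simp; omega
      · simpa [hk] using this
    · simp [sum_add_distrib, hs, sum_pi_single', hi]

/-- `2 ^ m` pebbles on a walk with `m + 1` vertices suffice to bring one pebble to its end. -/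
lemma reach_end {φ : ℕ → V} : ∀ (m : ℕ) (c : ℕ → ℕ), IsPath G φ (m + 1) →
    2 ^ m ≤ ∑ i ∈ range (m + 1), c i →
    ∃ E : V → ℕ, Relation.ReflTransGen (PebblingMove G) (push φ (m + 1) c) (Pi.single (φ m) 1 + E) := by
  intro m
  induction m with
  | zero =>
    intro c _ h
    have h0 : 1 ≤ c 0 := by simpa using h
    refine ⟨push φ 1 c - Pi.single (φ 0) 1, ?_⟩
    rw [add_tsub_cancel_of_le (single_le_push (by omega) h0)]
  | succ m ih =>
    intro c hp h
    by_cases hc : 1 ≤ c (m + 1)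
    · refine ⟨push φ (m + 2) c - Pi.single (φ (m + 1)) 1, ?_⟩
      rw [add_tsub_cancel_of_le (single_le_push (by omega) hc)]
    · rw [sum_range_succ] at h
      -- Split the pebbles into two halves, each of which brings a pebble to `φ m`.
      obtain ⟨d, hd, hs⟩ := exists_sub (range (m + 1)) c (2 ^ m) (by rw [pow_succ] at h; omega)
      have hcd : c = d + (c - d) := (add_tsub_cancel_of_le hd).symm
      have hs' : ∑ i ∈ range (m + 1), c i
          = ∑ i ∈ range (m + 1), d i + ∑ i ∈ range (m + 1), (c - d) i := by
        rw [← sum_add_distrib]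
        exact sum_congr rfl fun i _ => congrFun hcd i
      obtain ⟨E, hE⟩ := ih d (hp.mono (by omega)) hs.ge
      obtain ⟨F, hF⟩ := ih (c - d) (hp.mono (by omega)) (by rw [pow_succ] at h; omega)
      have h1 := reach_add hE hF
      rw [← push_add, ← hcd] at h1
      have h2 : Relation.ReflTransGen (PebblingMove G)
          (Pi.single (φ m) 1 + E + (Pi.single (φ m) 1 + F))
          (Pi.single (φ (m + 1)) 1 + (E + F)) := by
        have h3 := reach_add (reach_single (hp m (by omega)))
          (.refl : Relation.ReflTransGen (PebblingMove G) (E + F) (E + F))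
        have h4 : (Pi.single (φ m) 2 : V → ℕ) = Pi.single (φ m) 1 + Pi.single (φ m) 1 := by
          rw [← Pi.single_add]
        rw [h4] at h3
        convert h3 using 1
        abel
      refine ⟨E + F + Pi.single (φ (m + 1)) (c (m + 1)), ?_⟩
      rw [push_succ, ← add_assoc]
      exact reach_add (h1.trans h2) .refl

lemma solv_end {φ : ℕ → V} {m : ℕ} {c : ℕ → ℕ} (hp : IsPath G φ (m + 1))
    (h : 2 ^ m ≤ ∑ i ∈ range (m + 1), c i) :
    Solv G (push φ (m + 1) c) {v | v = φ m ∨ G.Adj (φ m) v} := by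
  obtain ⟨E, hE⟩ := reach_end m c hp h
  exact ((solv_single (φ m)).mono (le_add_of_nonneg_right zero_le) subset_rfl).of_reach hE

/-- `2 ^ (m + 1)` pebbles on a walk with `m + 3` vertices dominate its last three vertices. -/
lemma solv_last_three {φ : ℕ → V} {m : ℕ} {c : ℕ → ℕ} (hp : IsPath G φ (m + 3))
    (h : 2 ^ (m + 1) ≤ ∑ i ∈ range (m + 3), c i) :
    Solv G (push φ (m + 3) c) {φ m, φ (m + 1), φ (m + 2)} := by
  have a0 : G.Adj (φ m) (φ (m + 1)) := hp m (by omega)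
  have a1 : G.Adj (φ (m + 1)) (φ (m + 2)) := hp (m + 1) (by omega)
  have mid : ({φ m, φ (m + 1), φ (m + 2)} : Set V)
      ⊆ {v | v = φ (m + 1) ∨ G.Adj (φ (m + 1)) v} := by
    rintro v (rfl | rfl | rfl)
    · exact Or.inr a0.symm
    · exact Or.inl rfl
    · exact Or.inr a1
  have hpush : push φ (m + 2) c ≤ push φ (m + 3) c := by
    rw [push_succ φ (m + 2)]; exact le_add_of_nonneg_right zero_le
  by_cases h2 : 2 ≤ c (m + 2)
  · exact ((solv_single _).of_reach (reach_single a1.symm)).mono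
      (single_le_push (by omega) h2) mid
  by_cases h1 : c (m + 2) = 0
  · refine (solv_end (m := m + 1) (c := c) (hp.mono (by omega)) ?_).mono hpush mid
    rw [sum_range_succ] at h
    simpa [h1] using h
  by_cases h0 : 1 ≤ c (m + 1)
  · exact (solv_single _).mono (single_le_push (by omega) h0) mid
  -- The last vertex carries one pebble, and another one can be brought to `φ m`.
  · have hs : 2 ^ m ≤ ∑ i ∈ range (m + 1), c i := by
      rw [sum_range_succ, sum_range_succ, pow_succ] at h
      have := Nat.one_le_two_pow (n := m)
      omega
    have key := (solv_end (hp.mono (by omega)) hs).add (solv_single (G := G) (φ (m + 2)))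
    refine key.mono ?_ ?_
    · rw [push_succ φ (m + 2), push_succ φ (m + 1)]
      exact add_le_add (le_add_of_nonneg_right zero_le) (Pi.single_mono _ (by omega))
    · rintro v (rfl | rfl | rfl)
      · exact Or.inl (Or.inl rfl)
      · exact Or.inl (Or.inr a0)
      · exact Or.inr (Or.inl rfl)

/-- If at most `2 ^ (m + 1)` pebbles lie on the last three vertices, then these, completed to a
set of `2 ^ (m + 1)` pebbles, dominate the last three vertices, and all other pebbles remain
available on the first `m` vertices. -/
lemma solv_step {φ : ℕ → V} {m r : ℕ} {c : ℕ → ℕ} {B : Set V} (hp : IsPath G φ (m + 3))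
    (hw : c m + c (m + 1) + c (m + 2) ≤ 2 ^ (m + 1))
    (h : 2 ^ (m + 1) + r ≤ ∑ i ∈ range (m + 3), c i)
    (ih : ∀ c' : ℕ → ℕ, r ≤ ∑ i ∈ range m, c' i → Solv G (push φ m c') B) :
    Solv G (push φ (m + 3) c) (B ∪ {φ m, φ (m + 1), φ (m + 2)}) := by
  simp only [sum_range_succ] at h
  obtain ⟨d, hd, hs⟩ := exists_sub (range m) c
    (2 ^ (m + 1) - (c m + c (m + 1) + c (m + 2))) (by omega)
  have hcd : c = d + (c - d) := (add_tsub_cancel_of_le hd).symm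
  have hs' : ∑ i ∈ range m, c i = ∑ i ∈ range m, d i + ∑ i ∈ range m, (c - d) i := by
    rw [← sum_add_distrib]
    exact sum_congr rfl fun i _ => congrFun hcd i
  let e : ℕ → ℕ := fun i => if i < m then d i else c i
  have hes : ∑ i ∈ range m, e i = ∑ i ∈ range m, d i :=
    sum_congr rfl fun i hi => by simp [e, mem_range.1 hi]
  have he : 2 ^ (m + 1) ≤ ∑ i ∈ range (m + 3), e i := by
    simp only [sum_range_succ, hes]
    simp only [e, lt_irrefl, if_false, show ¬ m + 1 < m by omega, show ¬ m + 2 < m by omega]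
    omega
  have key := (ih (c - d) (by omega)).add (solv_last_three hp he)
  refine key.mono (le_of_eq ?_) subset_rfl
  have h1 : push φ m e = push φ m d := push_congr fun i hi => by simp [e, hi]
  have h2 : push φ m c = push φ m d + push φ m (c - d) := by rw [← push_add, ← hcd]
  simp only [push_succ, h1, h2]
  simp only [e, lt_irrefl, if_false, show ¬ m + 1 < m by omega, show ¬ m + 2 < m by omega]
  abel

/-- `T j K = ∑ 2 ^ (j + 3 i + 1)` over `i < K`: the number of pebbles needed on the end vertex of a path
with `j + 3 K` vertices to dominate all but the `j` vertices nearest to it. -/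
def T (j K : ℕ) : ℕ := ∑ i ∈ range K, 2 ^ (j + 3 * i + 1)

lemma T_succ (j K : ℕ) : T j (K + 1) = 2 ^ (j + 3 * K + 1) + T j K := by
  rw [T, sum_range_succ, add_comm]; rfl

lemma seven_mul_T (j K : ℕ) : 7 * T j K + 2 ^ (j + 1) = 2 ^ (j + 3 * K + 1) := by
  induction K with
  | zero => simp [T]
  | succ K ih =>
    rw [T_succ, show j + 3 * (K + 1) + 1 = (j + 3 * K + 1) + 3 by ring, pow_add _ _ 3]
    omega

/-- The number of pebbles which suffices to dominate a path with `j + 3 K` vertices, `j < 3`. -/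
def pathNum (j K : ℕ) : ℕ := T j K + if j = 0 then 0 else 1

lemma image_Ico_add_three (φ : ℕ → V) (j m : ℕ) :
    φ '' Set.Ico j (m + 3) ⊆ φ '' Set.Ico j m ∪ {φ m, φ (m + 1), φ (m + 2)} := by
  rintro _ ⟨i, ⟨hj, hi⟩, rfl⟩
  by_cases h : i < m
  · exact Or.inl ⟨i, ⟨hj, h⟩, rfl⟩
  · right
    obtain rfl | rfl | rfl : i = m ∨ i = m + 1 ∨ i = m + 2 := by omega
    all_goals simp

/-- Domination of a whole path, with `m + 3` vertices. When more than `2 ^ (m + 1)` pebbles are on the last three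
vertices, the path is traversed in the other direction; if this is of no help either, the path has
four or five vertices and all pebbles are in the middle. -/
lemma solv_path (j : ℕ) (hj : j < 3) : ∀ (K : ℕ) (φ : ℕ → V) (c : ℕ → ℕ),
    IsPath G φ (j + 3 * K) → pathNum j K ≤ ∑ i ∈ range (j + 3 * K), c i →
    Solv G (push φ (j + 3 * K) c) (φ '' Set.Ico 0 (j + 3 * K)) := by
  intro K
  induction K with
  | zero =>
    intro φ c hp h
    simp only [mul_zero, add_zero] at *
    interval_cases j
    · simpa using solv_empty _
    · have h0 : 1 ≤ c 0 := by simpa [pathNum, T] using h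
      refine (solv_single (φ 0)).mono (single_le_push (by omega) h0) ?_
      rintro _ ⟨i, ⟨_, hi⟩, rfl⟩
      obtain rfl : i = 0 := by omega
      exact Or.inl rfl
    · have h0 : 1 ≤ c 0 + c 1 := by simpa [pathNum, T, sum_range_succ] using h
      have a := hp 0 (by omega)
      by_cases h1 : 1 ≤ c 0
      · refine (solv_single (φ 0)).mono (single_le_push (by omega) h1) ?_
        rintro _ ⟨i, ⟨_, hi⟩, rfl⟩
        obtain rfl | rfl : i = 0 ∨ i = 1 := by omega
        · exact Or.inl rfl
        · exact Or.inr a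
      · refine (solv_single (φ 1)).mono (single_le_push (i := 1) (c := c) (by omega)
          (by omega)) ?_
        rintro _ ⟨i, ⟨_, hi⟩, rfl⟩
        obtain rfl | rfl : i = 0 ∨ i = 1 := by omega
        · exact Or.inr a.symm
        · exact Or.inl rfl
  | succ K ih =>
    intro φ c₀ hp h₀
    obtain ⟨c, hc, hs⟩ := exists_sub _ c₀ _ h₀
    suffices hmain : Solv G (push φ (j + 3 * (K + 1)) c) (φ '' Set.Ico 0 (j + 3 * (K + 1))) from
      hmain.mono (push_mono fun i _ => hc i) subset_rfl
    rw [show j + 3 * (K + 1) = (j + 3 * K) + 3 by ring] at *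
    have hsum : pathNum j (K + 1) = 2 ^ (j + 3 * K + 1) + pathNum j K := by
      simp [pathNum, T_succ, add_assoc]
    by_cases hw : c (j + 3 * K) + c (j + 3 * K + 1) + c (j + 3 * K + 2) ≤ 2 ^ (j + 3 * K + 1)
    · exact (solv_step hp hw (hs ▸ hsum.ge) fun c' hc' => ih φ c' (hp.mono (by omega)) hc').mono
        le_rfl (image_Ico_add_three φ 0 _)
    by_cases hw' : c 0 + c 1 + c 2 ≤ 2 ^ (j + 3 * K + 1)
    · have hp' : IsPath G (fun i => φ (j + 3 * K + 3 - 1 - i)) (j + 3 * K + 3) := by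
        intro i hi
        have := (hp (j + 3 * K + 3 - 1 - (i + 1)) (by omega)).symm
        rwa [show j + 3 * K + 3 - 1 - (i + 1) + 1 = j + 3 * K + 3 - 1 - i by omega] at this
      have key := solv_step (c := fun i => c (j + 3 * K + 3 - 1 - i)) (r := pathNum j K) hp' ?_ ?_
        fun c' hc' => ih _ c' (hp'.mono (by omega)) hc'
      · rw [push_reflect] at key
        refine key.mono le_rfl (subset_trans ?_ (image_Ico_add_three _ 0 _))
        rintro _ ⟨i, ⟨_, hi⟩, rfl⟩
        refine ⟨j + 3 * K + 3 - 1 - i, ⟨by omega, by omega⟩, ?_⟩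
        simp only
        congr 1
        omega
      · simp only [show j + 3 * K + 3 - 1 - (j + 3 * K) = 2 by omega,
          show j + 3 * K + 3 - 1 - (j + 3 * K + 1) = 1 by omega,
          show j + 3 * K + 3 - 1 - (j + 3 * K + 2) = 0 by omega]
        omega
      · rw [sum_range_reflect, hs, hsum]
    -- Both end triples carry more than half of all pebbles, so they intersect.
    have hT := seven_mul_T j K
    have hpn : pathNum j K ≤ T j K + 1 := by unfold pathNum; split_ifs <;> omega
    have hK : K = 0 := by
      by_contra hK
      have h1 : range 3 ⊆ range (j + 3 * K) := range_subset_range.2 (by omega)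
      have h2 := sum_le_sum_of_subset (f := c) h1
      have h3 : 2 ^ 4 ≤ 2 ^ (j + 3 * K + 1) := Nat.pow_le_pow_right (by omega) (by omega)
      simp only [sum_range_succ, sum_range_zero] at hs h2
      generalize 2 ^ (j + 3 * K + 1) = P at *
      generalize 2 ^ (j + 1) = Q at *
      omega
    subst hK
    have : j = 0 ∨ j = 1 ∨ j = 2 := by omega
    obtain rfl | rfl | rfl := this
    · simp [pathNum, T, sum_range_succ] at hsum hs hw
      omega
    · simp [pathNum, T, sum_range_succ] at hsum hs hw hw' ⊢
      have a0 := hp 0 (by omega)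
      have a1 := hp 1 (by omega)
      have a2 := hp 2 (by omega)
      simp only [Nat.reduceAdd] at a0 a1 a2
      have hpush : push φ 4 c = Pi.single (φ 1) (c 1) + Pi.single (φ 2) (c 2) := by
        simp [push, sum_range_succ, show c 0 = 0 by omega, show c 3 = 0 by omega]
      have key : Solv G (Pi.single (φ 1) 1 + Pi.single (φ 2) 1) (φ '' Set.Ico 0 4) := by
        refine ((solv_single (φ 1)).add (solv_single (φ 2))).mono le_rfl ?_
        rintro _ ⟨i, ⟨_, hi⟩, rfl⟩
        interval_cases i
        · exact Or.inl (Or.inr a0.symm)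
        · exact Or.inl (Or.inl rfl)
        · exact Or.inr (Or.inl rfl)
        · exact Or.inr (Or.inr a2)
      rw [hpush]
      by_cases h3 : 3 ≤ c 1
      · refine (key.of_reach (reach_add .refl (reach_single a1))).mono (B := φ '' Set.Ico 0 4)
          ?_ subset_rfl
        rw [← Pi.single_add]
        exact (Pi.single_mono _ h3).trans (le_add_of_nonneg_right zero_le)
      · refine (key.of_reach (reach_add (reach_single a1.symm) .refl)).mono
          (B := φ '' Set.Ico 0 4) ?_ subset_rfl
        rw [← Pi.single_add]
        exact (Pi.single_mono _ (show 2 + 1 ≤ c 2 by omega)).trans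
          (le_add_of_nonneg_left zero_le)
    · simp [pathNum, T, sum_range_succ] at hsum hs hw hw' ⊢
      have a0 := hp 0 (by omega)
      have a1 := hp 1 (by omega)
      have a2 := hp 2 (by omega)
      have a3 := hp 3 (by omega)
      simp only [Nat.reduceAdd] at a0 a1 a2 a3
      have key := ((solv_single (φ 1)).of_reach (reach_single a1.symm)).add
        ((solv_single (φ 3)).of_reach (reach_single a2))
      rw [← Pi.single_add] at key
      refine key.mono (single_le_push (by omega) (show 2 + 2 ≤ c 2 by omega)) ?_
      rintro _ ⟨i, ⟨_, hi⟩, rfl⟩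
      interval_cases i
      · exact Or.inl (Or.inr a0.symm)
      · exact Or.inl (Or.inl rfl)
      · exact Or.inl (Or.inr a1)
      · exact Or.inr (Or.inl rfl)
      · exact Or.inr (Or.inr a3)

/-- With `T j K` pebbles all but the first `j` vertices of a path can be dominated. -/
lemma solv_path_tail (j : ℕ) (hj : j < 3) : ∀ (K : ℕ) (φ : ℕ → V) (c : ℕ → ℕ),
    IsPath G φ (j + 3 * K) → T j K ≤ ∑ i ∈ range (j + 3 * K), c i →
    Solv G (push φ (j + 3 * K) c) (φ '' Set.Ico j (j + 3 * K)) := by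
  intro K φ
  induction K with
  | zero => intro c _ _; simpa using solv_empty _
  | succ K ih =>
    intro c hp h
    rcases Nat.eq_zero_or_pos j with rfl | hj0
    · exact solv_path 0 (by omega) (K + 1) φ c hp (by simpa [pathNum] using h)
    rw [show j + 3 * (K + 1) = (j + 3 * K) + 3 by ring] at *
    by_cases hw : c (j + 3 * K) + c (j + 3 * K + 1) + c (j + 3 * K + 2) ≤ 2 ^ (j + 3 * K + 1)
    · exact (solv_step hp hw ((T_succ j K) ▸ h) fun c' hc' => ih c' (hp.mono (by omega)) hc').mono
        le_rfl (image_Ico_add_three φ j _)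
    -- The last three vertices carry enough pebbles to dominate the path without its first `j`
    -- vertices.
    · have hp' : IsPath G (fun i => φ (j + i)) (0 + 3 * (K + 1)) := fun i hi =>
        hp (j + i) (by omega)
      have key := solv_path 0 (by omega) (K + 1) (fun i => φ (j + i)) (fun i => c (j + i)) hp' ?_
      · have hle := push_shift_le φ (0 + 3 * (K + 1)) j c
        rw [show j + (0 + 3 * (K + 1)) = j + 3 * K + 3 by ring] at hle
        refine key.mono hle ?_
        rintro _ ⟨i, ⟨h1, h2⟩, rfl⟩
        exact ⟨i - j, ⟨by omega, by omega⟩, by simp only; congr 1; omega⟩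
      · have hT := seven_mul_T 0 (K + 1)
        have h1 : 2 ^ (3 * K + 2) ≤ 2 ^ (j + 3 * K + 1) :=
          Nat.pow_le_pow_right (by omega) (by omega)
        rw [show 0 + 3 * (K + 1) + 1 = (3 * K + 2) + 2 by ring, pow_add _ _ 2] at hT
        rw [show 0 + 3 * (K + 1) = 3 * K + 3 by ring]
        simp only [sum_range_succ, pathNum, if_true, ← add_assoc]
        rw [show j + 3 * K + 1 = j + (3 * K + 1) by ring] at *
        rw [show j + 3 * K + 2 = j + (3 * K + 2) by ring] at *
        simp only [← add_assoc] at *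
        omega

end Pebbling

/-! ### Upper bound on the cycle -/

section Cycle

open Fin.CommRing

variable {M : ℕ}

lemma cast_period (M : ℕ) : (2 * (M : Fin (2 * M + 1)) + 1) = 0 := by
  have h := Fin.natCast_self (2 * M + 1)
  push_cast at h
  exact h

lemma val_one (hM : 1 ≤ M) : ((1 : Fin (2 * M + 1)) : ℕ) = 1 := by
  rw [Fin.val_one', Nat.mod_eq_of_lt (by omega)]

lemma adj_iff (hM : 1 ≤ M) (u v : Fin (2 * M + 1)) :
    (SimpleGraph.cycleGraph (2 * M + 1)).Adj u v ↔ u = v + 1 ∨ u = v - 1 := by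
  rw [SimpleGraph.cycleGraph_adj']
  have key : ∀ w : Fin (2 * M + 1), (w : ℕ) = 1 ↔ w = 1 := fun w => by
    rw [Fin.ext_iff, val_one hM]
  rw [key, key, sub_eq_iff_eq_add, sub_eq_iff_eq_add, eq_sub_iff_add_eq, add_comm 1 v, add_comm 1 u,
    eq_comm (a := v)]

/-- Every sum over the cycle splits into a central term and the two arcs on either side of it. -/
lemma sum_split {A : Type*} [AddCommMonoid A] (F : Fin (2 * M + 1) → A) (v : Fin (2 * M + 1)) :
    ∑ w, F w = F v + ∑ i ∈ range M, F (v + ((i + 1 : ℕ) : Fin (2 * M + 1)))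
      + ∑ i ∈ range M, F (v - ((i + 1 : ℕ) : Fin (2 * M + 1))) := by
  have h1 : ∑ w, F w = ∑ i ∈ range (2 * M + 1), F (v + (i : Fin (2 * M + 1))) := by
    rw [← Equiv.sum_comp (Equiv.addLeft v), ← Fin.sum_univ_eq_sum_range]
    exact sum_congr rfl fun w _ => by simp
  have hr : range (2 * M + 1) = range ((M + 1) + M) := by congr 1; omega
  rw [h1, hr, sum_range_add, sum_range_succ', add_comm (F v)]
  congr 1
  · simp
  · rw [← sum_range_reflect]
    refine sum_congr rfl fun i hi => ?_
    have hi' := mem_range.1 hi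
    congr 1
    have h2 : (((M + 1 + (M - 1 - i)) + (i + 1) : ℕ) : Fin (2 * M + 1)) = 0 := by
      have e : (M + 1 + (M - 1 - i)) + (i + 1) = 2 * M + 1 := by omega
      exact (congrArg Nat.cast e).trans (Fin.natCast_self (2 * M + 1))
    rw [Nat.cast_add] at h2
    have h3 : ((M + 1 + (M - 1 - i) : ℕ) : Fin (2 * M + 1)) = -((i + 1 : ℕ) : Fin (2 * M + 1)) :=
      eq_neg_of_add_eq_zero_left h2
    rw [h3, sub_eq_add_neg]

lemma exists_offset (v w : Fin (2 * M + 1)) :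
    ∃ i < M + 1, w = v + (i : Fin (2 * M + 1)) ∨ w = v - (i : Fin (2 * M + 1)) := by
  have hw : w = v + (((w - v : Fin (2 * M + 1)) : ℕ) : Fin (2 * M + 1)) := by
    rw [Fin.cast_val_eq_self]; ring
  by_cases h : ((w - v : Fin (2 * M + 1)) : ℕ) < M + 1
  · exact ⟨_, h, Or.inl hw⟩
  · have hlt := (w - v).isLt
    refine ⟨2 * M + 1 - ((w - v : Fin (2 * M + 1)) : ℕ), by omega, Or.inr ?_⟩
    rw [Nat.cast_sub hlt.le, Fin.natCast_self, Fin.cast_val_eq_self]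
    ring

/-- The pebbles on the arc of `M` vertices after `v`. -/
def arcSum (C : Fin (2 * M + 1) → ℕ) (v : Fin (2 * M + 1)) : ℕ :=
  ∑ i ∈ range M, C (v + ((i + 1 : ℕ) : Fin (2 * M + 1)))

lemma arcSum_left (C : Fin (2 * M + 1) → ℕ) (v : Fin (2 * M + 1)) :
    ∑ i ∈ range M, C (v - ((i + 1 : ℕ) : Fin (2 * M + 1)))
      = arcSum C (v - ((M + 1 : ℕ) : Fin (2 * M + 1))) := by
  rw [arcSum, ← sum_range_reflect]
  refine sum_congr rfl fun i hi => ?_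
  have hi' := mem_range.1 hi
  congr 1
  have h : ((M + 1 : ℕ) : Fin (2 * M + 1))
      = ((M - 1 - i + 1 : ℕ) : Fin (2 * M + 1)) + ((i + 1 : ℕ) : Fin (2 * M + 1)) := by
    rw [← Nat.cast_add]
    congr 1
    omega
  rw [h]
  ring

/-- The pebbles along the walk `φ`, where only `t` pebbles of the starting vertex are used. -/
def armConf {V : Type*} (C : V → ℕ) (φ : ℕ → V) (t : ℕ) : ℕ → ℕ :=
  fun i => if i = 0 then t else C (φ i)

lemma arms_le (C : Fin (2 * M + 1) → ℕ) (v : Fin (2 * M + 1)) (t t' e : ℕ)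
    (h : t + t' + e ≤ C v) :
    push (fun i => v + (i : Fin (2 * M + 1))) (M + 1)
        (armConf C (fun i => v + (i : Fin (2 * M + 1))) t)
      + push (fun i => v - (i : Fin (2 * M + 1))) (M + 1)
        (armConf C (fun i => v - (i : Fin (2 * M + 1))) t')
      + Pi.single v e ≤ C := by
  have hC : C = ∑ w, Pi.single w (C w) := (univ_sum_single C).symm
  rw [sum_split _ v] at hC
  simp only [push, sum_range_succ', armConf, if_true, Nat.add_eq_zero_iff, one_ne_zero, and_false,
    if_false, Nat.cast_zero, add_zero, sub_zero]
  conv_rhs => rw [hC]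
  have h1 : (Pi.single v t + Pi.single v t' + Pi.single v e : Fin (2 * M + 1) → ℕ)
      ≤ Pi.single v (C v) := by
    rw [← Pi.single_add, ← Pi.single_add]
    exact Pi.single_mono v h
  generalize (∑ i ∈ range M, Pi.single (v + ((i + 1 : ℕ) : Fin (2 * M + 1))) _ :
    Fin (2 * M + 1) → ℕ) = A
  generalize (∑ i ∈ range M, Pi.single (v - ((i + 1 : ℕ) : Fin (2 * M + 1))) _ :
    Fin (2 * M + 1) → ℕ) = B
  intro w
  have := h1 w
  simp only [Pi.add_apply] at this ⊢
  omega

lemma path_right (hM : 1 ≤ M) (v : Fin (2 * M + 1)) (l : ℕ) :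
    IsPath (SimpleGraph.cycleGraph (2 * M + 1)) (fun i => v + (i : Fin (2 * M + 1))) l := by
  intro i _
  rw [adj_iff hM]
  right
  push_cast
  ring

lemma path_left (hM : 1 ≤ M) (v : Fin (2 * M + 1)) (l : ℕ) :
    IsPath (SimpleGraph.cycleGraph (2 * M + 1)) (fun i => v - (i : Fin (2 * M + 1))) l := by
  intro i _
  rw [adj_iff hM]
  left
  push_cast
  ring

lemma sum_armConf_right (C : Fin (2 * M + 1) → ℕ) (v : Fin (2 * M + 1)) (t : ℕ) :
    ∑ i ∈ range (M + 1), armConf C (fun i => v + (i : Fin (2 * M + 1))) t i = arcSum C v + t := by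
  simp [armConf, sum_range_succ', arcSum]

lemma sum_armConf_left (C : Fin (2 * M + 1) → ℕ) (v : Fin (2 * M + 1)) (t : ℕ) :
    ∑ i ∈ range (M + 1), armConf C (fun i => v - (i : Fin (2 * M + 1))) t i
      = arcSum C (v - ((M + 1 : ℕ) : Fin (2 * M + 1))) + t := by
  rw [← arcSum_left]
  simp [armConf, sum_range_succ']

lemma domCoverSolvable_of_solv {V : Type*} [DecidableEq V] {G : SimpleGraph V} {C : V → ℕ}
    {A : Set V} (h : Solv G C A) (hA : ∀ v, v ∈ A) : DomCoverSolvable G C := by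
  obtain ⟨C', hC, hd⟩ := h
  refine ⟨C', hC, fun v => ?_⟩
  simpa using hd v (hA v)

/-- If both arcs next to `v` are light, the pebbles on `v` can be shared out between them. -/
lemma solvable_of_light {j K : ℕ} (hj : j < 3) (hM : 1 ≤ M) (hjK : M + 1 = j + 3 * K)
    {C : Fin (2 * M + 1) → ℕ} (hC : 2 * T j K + (if j = 0 then 0 else 1) ≤ ∑ v, C v)
    {v : Fin (2 * M + 1)} (hR : arcSum C v ≤ T j K)
    (hL : arcSum C (v - ((M + 1 : ℕ) : Fin (2 * M + 1))) ≤ T j K) :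
    DomCoverSolvable (SimpleGraph.cycleGraph (2 * M + 1)) C := by
  rw [sum_split C v, arcSum_left] at hC
  change _ ≤ C v + arcSum C v + _ at hC
  have s1 := solv_path_tail j hj K _ (armConf C (fun i => v + (i : Fin (2 * M + 1)))
    (T j K - arcSum C v)) (path_right hM v _) (by rw [← hjK, sum_armConf_right]; omega)
  have s2 := solv_path_tail j hj K _ (armConf C (fun i => v - (i : Fin (2 * M + 1)))
    (T j K - arcSum C (v - ((M + 1 : ℕ) : Fin (2 * M + 1))))) (path_left hM v _)
    (by rw [← hjK, sum_armConf_left]; omega)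
  rw [← hjK] at s1 s2
  -- For `j ≠ 0` one more pebble stays on `v` and dominates the vertices within distance one.
  have s3 : Solv (SimpleGraph.cycleGraph (2 * M + 1)) (Pi.single v (if j = 0 then 0 else 1))
      {w | j ≠ 0 ∧ (w = v ∨ (SimpleGraph.cycleGraph (2 * M + 1)).Adj v w)} := by
    by_cases h0 : j = 0
    · exact ⟨_, .refl, by simp [h0]⟩
    · simpa [h0] using solv_single (G := SimpleGraph.cycleGraph (2 * M + 1)) v
  refine domCoverSolvable_of_solv (((s1.add s2).add s3).mono
    (arms_le C v _ _ _ (by omega)) subset_rfl) fun w => ?_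
  obtain ⟨i, hi, hw⟩ := exists_offset v w
  by_cases hij : j ≤ i
  · rcases hw with rfl | rfl
    · exact Or.inl (Or.inl ⟨i, ⟨hij, hi⟩, rfl⟩)
    · exact Or.inl (Or.inr ⟨i, ⟨hij, hi⟩, rfl⟩)
  · refine Or.inr ⟨by omega, ?_⟩
    obtain rfl | rfl : i = 0 ∨ i = 1 := by omega
    · left; simpa using hw
    · right
      rw [adj_iff hM]
      rcases hw with rfl | rfl <;> simp

/-- If both arcs next to `v` are heavy, each of them dominates itself and `v`. -/
lemma solvable_of_heavy {j K : ℕ} (hj : j < 3) (hM : 1 ≤ M) (hjK : M + 1 = j + 3 * K)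
    {C : Fin (2 * M + 1) → ℕ} {v : Fin (2 * M + 1)} (hR : pathNum j K ≤ arcSum C v)
    (hL : pathNum j K ≤ arcSum C (v - ((M + 1 : ℕ) : Fin (2 * M + 1)))) :
    DomCoverSolvable (SimpleGraph.cycleGraph (2 * M + 1)) C := by
  have s1 := solv_path j hj K _ (armConf C (fun i => v + (i : Fin (2 * M + 1))) 0)
    (path_right hM v _) (by rw [← hjK, sum_armConf_right]; omega)
  have s2 := solv_path j hj K _ (armConf C (fun i => v - (i : Fin (2 * M + 1))) 0)
    (path_left hM v _) (by rw [← hjK, sum_armConf_left]; omega)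
  rw [← hjK] at s1 s2
  refine domCoverSolvable_of_solv ((s1.add s2).mono
    (le_trans (le_add_of_nonneg_right zero_le) (arms_le C v 0 0 0 (by omega))) subset_rfl)
    fun w => ?_
  obtain ⟨i, hi, rfl | rfl⟩ := exists_offset v w
  · exact Or.inl ⟨i, ⟨by omega, hi⟩, rfl⟩
  · exact Or.inr ⟨i, ⟨by omega, hi⟩, rfl⟩

lemma upper_bound {j K : ℕ} (hj : j < 3) (hM : 1 ≤ M) (hjK : M + 1 = j + 3 * K) :
    2 * T j K + (if j = 0 then 0 else 1) ∈
      DomCoverSet (SimpleGraph.cycleGraph (2 * M + 1)) := by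
  intro C hC
  by_contra hns
  have hlight : ∀ v, ¬ pathNum j K ≤ arcSum C v → arcSum C v ≤ T j K := by
    intro v hv
    unfold pathNum at hv
    split_ifs at hv <;> omega
  -- Heaviness changes under rotation by `M + 1`, hence is invariant under rotation by
  -- `2 (M + 1) = 1`, hence constant.
  have hflip : ∀ v, pathNum j K ≤ arcSum C v ↔
      ¬ pathNum j K ≤ arcSum C (v - ((M + 1 : ℕ) : Fin (2 * M + 1))) := by
    intro v
    constructor
    · exact fun h h' => hns (solvable_of_heavy hj hM hjK h h')
    · intro h
      by_contra h'
      exact hns (solvable_of_light hj hM hjK hC (hlight _ h') (hlight _ h))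
  have hstep : ∀ v, pathNum j K ≤ arcSum C v ↔ pathNum j K ≤ arcSum C (v - 1) := by
    intro v
    rw [hflip v, hflip (v - ((M + 1 : ℕ) : Fin (2 * M + 1))), not_not]
    have : v - ((M + 1 : ℕ) : Fin (2 * M + 1)) - ((M + 1 : ℕ) : Fin (2 * M + 1)) = v - 1 := by
      have := cast_period M
      push_cast
      linear_combination -this
    rw [this]
  have hconst : ∀ l : ℕ, pathNum j K ≤ arcSum C 0 ↔
      pathNum j K ≤ arcSum C (0 - (l : Fin (2 * M + 1))) := by
    intro l
    induction l with
    | zero => simp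
    | succ l ih =>
      rw [ih, hstep]
      push_cast
      rw [sub_sub]
  have h1 := hflip 0
  have h2 := hconst (M + 1)
  tauto

/-! ### Lower bound on the cycle -/

/-- Distance to the vertex `0`. -/
def dist0 (u : Fin (2 * M + 1)) : ℕ := min (u : ℕ) (2 * M + 1 - u)

lemma val_add_one' (hM : 1 ≤ M) (u : Fin (2 * M + 1)) :
    ((u + 1 : Fin (2 * M + 1)) : ℕ) = if (u : ℕ) = 2 * M then 0 else (u : ℕ) + 1 := by
  have hu := u.isLt
  rw [Fin.val_add, val_one hM]
  split_ifs with h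
  · simp [h]
  · exact Nat.mod_eq_of_lt (by omega)

lemma val_sub_one' (hM : 1 ≤ M) (u : Fin (2 * M + 1)) :
    ((u - 1 : Fin (2 * M + 1)) : ℕ) = if (u : ℕ) = 0 then 2 * M else (u : ℕ) - 1 := by
  have hu := u.isLt
  have h := val_add_one' hM (u - 1)
  rw [sub_add_cancel] at h
  have := (u - 1).isLt
  split_ifs at h ⊢ <;> omega

lemma dist0_nbrs (hM : 1 ≤ M) (u : Fin (2 * M + 1)) :
    (dist0 u = 0 ∧ dist0 (u + 1) = 1 ∧ dist0 (u - 1) = 1) ∨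
    (∃ e, dist0 u = e + 1 ∧ e + 2 ≤ M ∧
      ((dist0 (u + 1) = e ∧ dist0 (u - 1) = e + 2) ∨
        (dist0 (u + 1) = e + 2 ∧ dist0 (u - 1) = e))) ∨
    (∃ e, M = e + 1 ∧ dist0 u = M ∧
      ((dist0 (u + 1) = M ∧ dist0 (u - 1) = e) ∨ (dist0 (u + 1) = e ∧ dist0 (u - 1) = M))) := by
  have hu := u.isLt
  unfold dist0
  rw [val_add_one' hM, val_sub_one' hM]
  by_cases h0 : (u : ℕ) = 0
  · left; simp only [h0]; split_ifs <;> omega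
  · right
    by_cases h1 : min (u : ℕ) (2 * M + 1 - u) = M
    · right; refine ⟨M - 1, ?_⟩; split_ifs <;> omega
    · left; refine ⟨min (u : ℕ) (2 * M + 1 - u) - 1, ?_⟩; split_ifs <;> omega

/-- A pebble at distance `d` from `0` costs `2 ^ d` pebbles at `0`; this total value never grows. -/
lemma weight_move (hM : 1 ≤ M) {C C' : Fin (2 * M + 1) → ℕ}
    (h : PebblingMove (SimpleGraph.cycleGraph (2 * M + 1)) C C') :
    ∑ u, C' u * 2 ^ dist0 u ≤ ∑ u, C u * 2 ^ dist0 u := by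
  obtain ⟨u, v, huv, h2, rfl⟩ := h
  have hne : u ≠ v := huv.ne
  have hd : dist0 v ≤ dist0 u + 1 := by
    rw [adj_iff hM] at huv
    rcases dist0_nbrs hM v with ⟨h1, h2, h3⟩ | ⟨e, h1, _, h2⟩ | ⟨e, h0, h1, h2⟩ <;>
      rcases huv with rfl | rfl <;> omega
  have h1 : C = (C - Pi.single u 2) + Pi.single u 2 := by
    funext w
    by_cases hw : w = u
    · subst hw; simp; omega
    · simp [hw]
  have h3 : Function.update (Function.update C u (C u - 2)) v (C v + 1)
      = (C - Pi.single u 2) + Pi.single v 1 := by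
    funext w
    by_cases hwv : w = v
    · subst hwv; simp [hne.symm]
    · by_cases hwu : w = u
      · subst hwu; simp [hne]
      · simp [hwv, hwu]
  have hs : ∀ (w : Fin (2 * M + 1)) (t : ℕ),
      ∑ x, (Pi.single w t : Fin (2 * M + 1) → ℕ) x * 2 ^ dist0 x = t * 2 ^ dist0 w := by
    intro w t
    simp [Pi.single_apply]
  rw [h3]
  conv_rhs => rw [h1]
  simp only [Pi.add_apply, add_mul, sum_add_distrib, hs]
  have : 2 ^ dist0 v ≤ 2 ^ (dist0 u + 1) := Nat.pow_le_pow_right (by omega) hd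
  rw [pow_succ] at this
  omega

/-- The dual weight at distance `d` from `0`: it sits on the vertices at distance
`M, M - 3, M - 6, …` (at least `2`), and on `0` itself if `j ≠ 0`. -/
def dualW (j d : ℕ) : ℕ :=
  if d = 0 then (if j = 0 then 0 else 1) else if 2 ≤ d ∧ d % 3 = (j + 2) % 3 then 2 ^ (d - 1) else 0

lemma sum_dualW (j : ℕ) (hj : j < 3) (K : ℕ) :
    ∑ d ∈ range (j + 3 * K), dualW j d = T j K + if j = 0 then 0 else 1 := by
  induction K with
  | zero => interval_cases j <;> simp [T, dualW, sum_range_succ]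
  | succ K ih =>
    rw [show j + 3 * (K + 1) = j + 3 * K + 1 + 1 + 1 by ring, sum_range_succ, sum_range_succ,
      sum_range_succ, ih, T_succ]
    have h0 : dualW j (j + 3 * K) = 0 := by
      unfold dualW; split_ifs <;> omega
    have h1 : dualW j (j + 3 * K + 1) = 0 := by
      unfold dualW; split_ifs <;> omega
    have h2 : dualW j (j + 3 * K + 1 + 1) = 2 ^ (j + 3 * K + 1) := by
      unfold dualW
      rw [if_neg (by omega), if_pos (by omega)]
      rfl
    rw [h0, h1, h2]
    ring

lemma dualW_le (j d : ℕ) : dualW j (d + 1) ≤ 2 ^ d := by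
  unfold dualW
  split_ifs <;> simp_all

/-- The dual weight of a closed neighbourhood is at most the cost of a pebble at its centre. -/
lemma dual_feasible {j K : ℕ} (hj : j < 3) (hM : 1 ≤ M) (hjK : M + 1 = j + 3 * K)
    (u : Fin (2 * M + 1)) :
    dualW j (dist0 u) + dualW j (dist0 (u + 1)) + dualW j (dist0 (u - 1)) ≤ 2 ^ dist0 u := by
  have hone : dualW j 1 = 0 := by simp [dualW]
  have hzero : dualW j 0 ≤ 1 := by simp only [dualW]; split_ifs <;> omega
  have hmid : ∀ e, dualW j e + dualW j (e + 1) + dualW j (e + 2) ≤ 2 ^ (e + 1) := by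
    intro e
    have a1 := dualW_le j e
    have a2 := dualW_le j (e + 1)
    by_cases he : e = 0
    · subst he
      simp only [dualW]
      split_ifs <;> simp <;> omega
    · obtain ⟨f, rfl⟩ : ∃ f, e = f + 1 := ⟨e - 1, by omega⟩
      have a0 := dualW_le j f
      have p1 : 2 ^ (f + 1) = 2 * 2 ^ f := by ring
      have p2 : 2 ^ (f + 1 + 1) = 4 * 2 ^ f := by ring
      have e2 : dualW j (f + 1 + 2) = dualW j (f + 1 + 1 + 1) := rfl
      rw [e2]
      by_cases h : (f + 1 + 1 + 1) % 3 = (j + 2) % 3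
      · have z1 : dualW j (f + 1) = 0 := by
          unfold dualW; rw [if_neg (by omega), if_neg (by omega)]
        have z2 : dualW j (f + 1 + 1) = 0 := by
          unfold dualW; rw [if_neg (by omega), if_neg (by omega)]
        rw [z1, z2]; omega
      · have z3 : dualW j (f + 1 + 1 + 1) = 0 := by
          unfold dualW; rw [if_neg (by omega), if_neg (by omega)]
        rw [z3]; omega
  have hend : ∀ e, M = e + 1 → dualW j e + 2 * dualW j (e + 1) ≤ 2 ^ (e + 1) := by
    intro e he
    have a1 := dualW_le j e
    have p1 : 2 ^ (e + 1) = 2 * 2 ^ e := by ring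
    by_cases h0 : e = 0
    · subst h0; simp only [zero_add, hone]; omega
    · have : dualW j e = 0 := by
        unfold dualW
        rw [if_neg h0, if_neg (by omega)]
      omega
  rcases dist0_nbrs hM u with ⟨h1, h2, h3⟩ | ⟨e, h1, _, ⟨h2, h3⟩ | ⟨h2, h3⟩⟩ |
    ⟨e, h0, h1, ⟨h2, h3⟩ | ⟨h2, h3⟩⟩
  · rw [h1, h2, h3, hone]; simpa using hzero
  · rw [h1, h2, h3]; have := hmid e; omega
  · rw [h1, h2, h3]; have := hmid e; omega
  · have := hend e h0; rw [h1, h2, h3, h0]; omega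
  · have := hend e h0; rw [h1, h2, h3, h0]; omega

lemma dual_total {j K : ℕ} (hj : j < 3) (hjK : M + 1 = j + 3 * K) :
    ∑ u : Fin (2 * M + 1), dualW j (dist0 u) = 2 * T j K + if j = 0 then 0 else 1 := by
  have h := sum_dualW j hj K
  rw [← hjK, sum_range_succ'] at h
  have hv : ∀ i < M, (((i + 1 : ℕ) : Fin (2 * M + 1)) : ℕ) = i + 1 := fun i hi => by
    rw [Fin.val_natCast, Nat.mod_eq_of_lt (by omega)]
  have hR : ∀ i ∈ range M, dualW j (dist0 (0 + ((i + 1 : ℕ) : Fin (2 * M + 1))))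
      = dualW j (i + 1) := by
    intro i hi
    have hi' := mem_range.1 hi
    congr 1
    rw [zero_add, dist0, hv i hi']
    omega
  have hL : ∀ i ∈ range M, dualW j (dist0 (0 - ((i + 1 : ℕ) : Fin (2 * M + 1))))
      = dualW j (i + 1) := by
    intro i hi
    have hi' := mem_range.1 hi
    congr 1
    rw [dist0, Fin.val_sub, hv i hi', Fin.val_zero, Nat.mod_eq_of_lt (by omega)]
    omega
  rw [sum_split _ 0, sum_congr rfl hR, sum_congr rfl hL]
  have h0 : dist0 (0 : Fin (2 * M + 1)) = 0 := by simp [dist0]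
  have h0' : dualW j 0 = if j = 0 then 0 else 1 := by simp [dualW]
  rw [h0]
  omega

/-- Linear programming duality: the support of `C'` dominates every vertex, so the cost of `C'`
is at least the total dual weight. -/
lemma dual_bound {j K : ℕ} (hj : j < 3) (hM : 1 ≤ M) (hjK : M + 1 = j + 3 * K)
    {C' : Fin (2 * M + 1) → ℕ}
    (hd : IsDomSet (SimpleGraph.cycleGraph (2 * M + 1)) {v | 0 < C' v}) :
    2 * T j K + (if j = 0 then 0 else 1) ≤ ∑ u, C' u * 2 ^ dist0 u := by
  rw [← dual_total hj hjK]
  have hdom : ∀ v, 1 ≤ C' v + C' (v - 1) + C' (v + 1) := by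
    intro v
    rcases hd v with h | ⟨u, hu, huv⟩
    · have : 0 < C' v := h
      omega
    · have hu' : 0 < C' u := hu
      rw [adj_iff hM] at huv
      rcases huv with rfl | rfl <;> omega
  have e1 : ∑ v, dualW j (dist0 v) * C' (v - 1) = ∑ u, dualW j (dist0 (u + 1)) * C' u := by
    rw [← Equiv.sum_comp (Equiv.addRight (1 : Fin (2 * M + 1)))]
    simp
  have e2 : ∑ v, dualW j (dist0 v) * C' (v + 1) = ∑ u, dualW j (dist0 (u - 1)) * C' u := by
    rw [← Equiv.sum_comp (Equiv.subRight (1 : Fin (2 * M + 1)))]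
    simp
  calc ∑ u, dualW j (dist0 u)
      ≤ ∑ v, dualW j (dist0 v) * (C' v + C' (v - 1) + C' (v + 1)) :=
        sum_le_sum fun v _ => Nat.le_mul_of_pos_right _ (hdom v)
    _ = ∑ v, dualW j (dist0 v) * C' v + ∑ v, dualW j (dist0 v) * C' (v - 1)
          + ∑ v, dualW j (dist0 v) * C' (v + 1) := by
        simp only [mul_add, sum_add_distrib]
    _ = ∑ v, dualW j (dist0 v) * C' v + ∑ u, dualW j (dist0 (u + 1)) * C' u
          + ∑ u, dualW j (dist0 (u - 1)) * C' u := by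
        rw [e1, e2]
    _ = ∑ u, C' u * (dualW j (dist0 u) + dualW j (dist0 (u + 1)) + dualW j (dist0 (u - 1))) := by
        simp only [← sum_add_distrib]
        exact sum_congr rfl fun u _ => by ring
    _ ≤ ∑ u, C' u * 2 ^ dist0 u :=
        sum_le_sum fun u _ => Nat.mul_le_mul_left _ (dual_feasible hj hM hjK u)

lemma lower_bound {j K : ℕ} (hj : j < 3) (hM : 1 ≤ M) (hjK : M + 1 = j + 3 * K) {k : ℕ}
    (hk : k ∈ DomCoverSet (SimpleGraph.cycleGraph (2 * M + 1))) :
    2 * T j K + (if j = 0 then 0 else 1) ≤ k := by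
  obtain ⟨C', hr, hd⟩ := hk (Pi.single 0 k) (by simp)
  refine (dual_bound hj hM hjK hd).trans ?_
  have hw : ∑ u, C' u * 2 ^ dist0 u
      ≤ ∑ u, (Pi.single 0 k : Fin (2 * M + 1) → ℕ) u * 2 ^ dist0 u := by
    clear hd
    induction hr with
    | refl => exact le_rfl
    | tail _ hmove ih => exact (weight_move hM hmove).trans ih
  refine hw.trans (le_of_eq ?_)
  simp [Pi.single_apply, dist0]

end Cycle

/-! ### Comparison with the closed form -/

lemma isLeast_cycle {M j K : ℕ} (hj : j < 3) (hM : 1 ≤ M) (hjK : M + 1 = j + 3 * K) :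
    IsLeast (DomCoverSet (SimpleGraph.cycleGraph (2 * M + 1)))
      (2 * T j K + if j = 0 then 0 else 1) :=
  ⟨upper_bound hj hM hjK, fun _ hk => lower_bound hj hM hjK hk⟩

/-- The sum in the statement, with the order of summation reversed. -/
lemma sum_reverse (m α k : ℕ) (hdecomp : m - 2 = α + 3 * k) :
    ∑ i ∈ range (k + 1), 2 ^ (m - 2 - 3 * i) = ∑ i ∈ range (k + 1), 2 ^ (α + 3 * i) := by
  rw [← sum_range_reflect]
  refine sum_congr rfl fun i hi => ?_
  have := mem_range.1 hi
  congr 1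
  omega

lemma sum_pow_eq (α k : ℕ) :
    7 * ∑ i ∈ range (k + 1), 2 ^ (α + 3 * i) + 2 ^ α = 2 ^ (α + 3 * k + 3) := by
  induction k with
  | zero => simp; ring
  | succ k ih => rw [sum_range_succ]; ring_nf at ih ⊢; omega

/-- For `m ≥ 2` and `n = 2m - 1` odd, writing `m - 2 = α_m + 3 k_m` with
`α_m ∈ {0,1,2}`, the domination cover pebbling number of the cycle `C_n` equals
`2 (Σ_{i=0}^{k_m} 2^(m-2-3i)) + 2⌊α_m/2⌋ - |α_m - 1|
  = 2^(m+2) (1 - 8^(-(k_m+1)))/7 + 2⌊α_m/2⌋ - |α_m - 1|`. -/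
theorem psi_cycle_odd (m n : ℕ) (hm : 2 ≤ m) (hn : n = 2 * m - 1) (α k : ℕ)
    (hα : α < 3) (hdecomp : m - 2 = α + 3 * k) :
    IsLeast (DomCoverSet (SimpleGraph.cycleGraph n))
      (2 * (∑ i ∈ Finset.range (k + 1), 2 ^ (m - 2 - 3 * i)) + 2 * (α / 2)
        - ((α : ℤ) - 1).natAbs) ∧
    ((2 * (∑ i ∈ Finset.range (k + 1), 2 ^ (m - 2 - 3 * i)) + 2 * (α / 2)
        - ((α : ℤ) - 1).natAbs : ℕ) : ℝ) =
      2 ^ (m + 2) * (1 - (8 : ℝ) ^ (-(k + 1 : ℤ))) / 7 + 2 * (α / 2 : ℕ)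
        - |(α : ℝ) - 1| := by
  have hrev := sum_reverse m α k hdecomp
  rw [hrev]
  have hgeom := sum_pow_eq α k
  constructor
  · obtain ⟨M, rfl⟩ : ∃ M, m = M + 1 := ⟨m - 1, by omega⟩
    obtain rfl : n = 2 * M + 1 := by omega
    interval_cases α
    · -- The summand `i = 0` of the reversed sum, doubled, minus `|α - 1| = 1`, is `[j ≠ 0] = 1`.
      have h := isLeast_cycle (M := M) (j := 2) (K := k) (by omega) (by omega) (by omega)
      convert h using 1
      have : T 2 k = ∑ i ∈ Finset.range k, 2 ^ (0 + 3 * (i + 1)) :=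
        Finset.sum_congr rfl fun i _ => by congr 1; ring
      rw [Finset.sum_range_succ', ← this]
      simp
      omega
    · have h := isLeast_cycle (M := M) (j := 0) (K := k + 1) (by omega) (by omega) (by omega)
      convert h using 1
      have : T 0 (k + 1) = ∑ i ∈ Finset.range (k + 1), 2 ^ (1 + 3 * i) :=
        Finset.sum_congr rfl fun i _ => by congr 1; ring
      rw [← this]
      simp
    · have h := isLeast_cycle (M := M) (j := 1) (K := k + 1) (by omega) (by omega) (by omega)
      convert h using 1
      have : T 1 (k + 1) = ∑ i ∈ Finset.range (k + 1), 2 ^ (2 + 3 * i) :=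
        Finset.sum_congr rfl fun i _ => by congr 1; ring
      rw [← this]
      simp
  · obtain rfl : m = α + 3 * k + 2 := by omega
    have hS : 1 ≤ ∑ i ∈ Finset.range (k + 1), 2 ^ (α + 3 * i) :=
      (Nat.one_le_two_pow).trans (Finset.single_le_sum (f := fun i => 2 ^ (α + 3 * i))
        (fun _ _ => Nat.zero_le _) (Finset.mem_range.2 (Nat.succ_pos k)))
    have hmain : (2 : ℝ) ^ (α + 3 * k + 2 + 2) * (1 - (8 : ℝ) ^ (-(k + 1 : ℤ))) / 7
        = 2 * ((∑ i ∈ Finset.range (k + 1), 2 ^ (α + 3 * i) : ℕ) : ℝ) := by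
      have hg : (7 : ℝ) * ((∑ i ∈ Finset.range (k + 1), 2 ^ (α + 3 * i) : ℕ) : ℝ) + 2 ^ α
          = 2 ^ (α + 3 * k + 3) := by exact_mod_cast hgeom
      have h8 : (8 : ℝ) ^ (-(k + 1 : ℤ)) * 2 ^ (3 * k + 3) = 1 := by
        rw [show 3 * k + 3 = 3 * (k + 1) by ring, pow_mul, zpow_neg,
          show ((k : ℤ) + 1) = ((k + 1 : ℕ) : ℤ) by push_cast; rfl, zpow_natCast]
        norm_num
      have e1 : (2 : ℝ) ^ (α + 3 * k + 2 + 2) = 2 * 2 ^ α * 2 ^ (3 * k + 3) := by ring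
      have e2 : (2 : ℝ) ^ (α + 3 * k + 3) = 2 ^ α * 2 ^ (3 * k + 3) := by ring
      rw [e2] at hg
      rw [e1]
      linear_combination (-2 / 7 : ℝ) * hg - (2 / 7 : ℝ) * 2 ^ α * h8
    rw [hmain]
    generalize (∑ i ∈ Finset.range (k + 1), 2 ^ (α + 3 * i)) = S at hS
    interval_cases α
    · have : ((2 * S + 2 * (0 / 2) - (((0 : ℕ) : ℤ) - 1).natAbs : ℕ) : ℝ) = 2 * S - 1 := by
        rw [show 2 * S + 2 * (0 / 2) - (((0 : ℕ) : ℤ) - 1).natAbs = 2 * S - 1 by simp,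
          Nat.cast_sub (by omega)]
        push_cast; ring
      rw [this]; norm_num
    · simp
    · have : ((2 * S + 2 * (2 / 2) - (((2 : ℕ) : ℤ) - 1).natAbs : ℕ) : ℝ) = 2 * S + 1 := by
        rw [show 2 * S + 2 * (2 / 2) - (((2 : ℕ) : ℤ) - 1).natAbs = 2 * S + 1 by simp]
        push_cast; ring
      rw [this]; norm_num; ring
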